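/- Let φ, ψ be orientation-preserving circle homeomorphisms with irrational rotation numbers α, β respectively, such that 1, α, β are rationally independent, and let Q₁, Q₂ be their unique minimal sets. Then the product homeomorphism f = φ × ψ of T^2 has Q₁ × Q₂ as a minimal set. -/

import Mathlib

open Filter Topology

/-- The circle `T¹ = ℝ/ℤ`. -/
abbrev T1 := UnitAddCircle

/-- A minimal set of a map `f`: nonempty, closed, invariant, with no proper
nonempty closed invariant subset. -/
def IsMinimalSet {X : Type*} [TopologicalSpace X] (f : X → X) (M : Set X) : Prop :=
  M.Nonempty ∧ IsClosed M ∧ f '' M = M ∧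
    ∀ M' ⊆ M, M'.Nonempty → IsClosed M' → f '' M' = M' → M' = M

/-!
A lift of `φ` is semiconjugate to `x ↦ x + α` by a monotone map of degree one, which is continuous
because its range is invariant under the dense group `ℤ + αℤ`. It descends to a semiconjugacy `H`
from `φ` to the rotation by `α`. The open set on which `H` is locally constant is invariant and
does not contain the minimal set `Q₁`, so it misses `Q₁`; by monotonicity, every neighbourhood of
a point of `Q₁` then contains a whole fibre of `H`. Having small fibres in this sense passes to
products, and a compact invariant set consisting of such points is minimal as soon as the factor
is.

The factor of the product is the translation of the torus by `(α, β)`. It is minimal: the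
distance to an invariant closed set is an invariant continuous function, and comparing Fourier
coefficients shows that it is constant.
-/

open Function Set

section MinimalSets

variable {X Y : Type*} [TopologicalSpace X] {f : X → X} {g : Y → Y} {H : X → Y}

theorem IsMinimalSet.disjoint_of_isOpen {Q O : Set X} (hQ : IsMinimalSet f Q) (hO : IsOpen O)
    (hfO : f ⁻¹' O = O) (hQO : ¬Q ⊆ O) : Disjoint Q O := by
  obtain ⟨-, hclosed, hinv, hmin⟩ := hQ
  have hdiff : f '' (Q \ O) = Q \ O := by
    rw [sdiff_eq, ← hfO, ← preimage_compl, image_inter_preimage, hinv, preimage_compl, hfO]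
  exact sdiff_eq_left.1
    (hmin _ sdiff_subset (sdiff_nonempty.2 hQO) (hclosed.sdiff hO) hdiff)

theorem isOpen_setOf_eventually_eq_self (H : X → Y) : IsOpen {z | ∀ᶠ w in 𝓝 z, H w = H z} := by
  refine isOpen_iff_mem_nhds.2 fun z (hz : ∀ᶠ w in 𝓝 z, H w = H z) ↦ ?_
  filter_upwards [hz.eventually_nhds, hz] with w hw hwz
  exact hw.mono fun _ hu ↦ hu.trans hwz.symm

theorem finite_image_of_forall_eventually_eq {K : Set X} (hK : IsCompact K)
    (hH : ∀ z ∈ K, ∀ᶠ w in 𝓝 z, H w = H z) : (H '' K).Finite := by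
  obtain ⟨t, -, hcover⟩ := hK.elim_nhds_subcover (fun z ↦ {w | H w = H z}) hH
  refine (t.finite_toSet.image H).subset ?_
  rintro _ ⟨w, hw, rfl⟩
  obtain ⟨z, hz, hwz⟩ := mem_iUnion₂.1 (hcover hw)
  exact ⟨z, hz, hwz.symm⟩

theorem IsMinimalSet.not_eventually_eq {φ : X ≃ₜ X} {Q : Set X} (hQ : IsMinimalSet φ Q)
    (hcompact : IsCompact Q) (hg : Injective g) (hsemi : Semiconj H φ g)
    (hinf : (H '' Q).Infinite) {x : X} (hx : x ∈ Q) : ¬∀ᶠ w in 𝓝 x, H w = H x := by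
  set O : Set X := {z | ∀ᶠ w in 𝓝 z, H w = H z}
  have hφO : φ ⁻¹' O = O := by
    ext z
    simp only [O, mem_preimage, mem_ofPred_eq, ← φ.map_nhds_eq, eventually_map, hsemi.eq,
      hg.eq_iff]
  have hQO : ¬Q ⊆ O := fun h ↦ hinf (finite_image_of_forall_eventually_eq hcompact h)
  exact disjoint_left.1 (hQ.disjoint_of_isOpen (isOpen_setOf_eventually_eq_self H) hφO hQO) hx

theorem IsMinimalSet.image_eq_univ [TopologicalSpace Y] [T2Space Y] (hg : IsMinimalSet g univ)
    (hH : Continuous H) (hsemi : Semiconj H f g) {M : Set X} (hM : IsCompact M)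
    (hne : M.Nonempty) (hinv : f '' M = M) : H '' M = univ :=
  hg.2.2.2 _ (subset_univ _) (hne.image H) (hM.image hH).isClosed (by
    rw [← hsemi.set_image, hinv])

end MinimalSets

section SmallFibers

variable {X X' Y Y' : Type*} [TopologicalSpace X] [TopologicalSpace X'] {H : X → Y} {H' : X' → Y'}

/-- Every neighbourhood of `x` contains a whole nonempty fibre of `H`. This is the form in which
injectivity of a semiconjugacy `H` on most of a minimal set is used: the fibre through `x` itself
need not be small. -/
def HasSmallFibersAt (H : X → Y) (x : X) : Prop :=
  ∀ U ∈ 𝓝 x, ∃ z, H ⁻¹' {H z} ⊆ U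

theorem hasSmallFibersAt_of_injective (hH : Injective H) (x : X) : HasSmallFibersAt H x :=
  fun _ hU ↦ ⟨x, fun _ hw ↦ hH hw ▸ mem_of_mem_nhds hU⟩

theorem HasSmallFibersAt.prodMap {x : X} {x' : X'} (hx : HasSmallFibersAt H x)
    (hx' : HasSmallFibersAt H' x') : HasSmallFibersAt (Prod.map H H') (x, x') := by
  intro W hW
  obtain ⟨U, hU, V, hV, hUV⟩ := mem_nhds_prod_iff.1 hW
  obtain ⟨z, hz⟩ := hx U hU
  obtain ⟨z', hz'⟩ := hx' V hV
  exact ⟨(z, z'), fun w hw ↦ hUV ⟨hz (congrArg Prod.fst hw), hz' (congrArg Prod.snd hw)⟩⟩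

theorem isMinimalSet_of_semiconj [TopologicalSpace Y] [T2Space Y] {f : X → X} {g : Y → Y}
    (hg : IsMinimalSet g univ) (hH : Continuous H) (hsemi : Semiconj H f g) {Q : Set X}
    (hne : Q.Nonempty) (hclosed : IsClosed Q) (hcompact : IsCompact Q) (hinv : f '' Q = Q)
    (hfibers : ∀ x ∈ Q, HasSmallFibersAt H x) : IsMinimalSet f Q := by
  refine ⟨hne, hclosed, hinv, fun M hMQ hMne hMclosed hMinv ↦ hMQ.antisymm fun x hx ↦ ?_⟩
  have himage : H '' M = univ :=
    hg.image_eq_univ hH hsemi (hcompact.of_isClosed_subset hMclosed hMQ) hMne hMinv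
  rw [← hMclosed.closure_eq, mem_closure_iff_nhds]
  intro U hU
  obtain ⟨z, hz⟩ := hfibers x hx U hU
  obtain ⟨w, hwM, hwz⟩ : H z ∈ H '' M := himage ▸ mem_univ _
  exact ⟨w, hz hwz, hwM⟩

end SmallFibers

section TorusRotation

theorem isMinimalSet_univ_of_isometry {X : Type*} [PseudoMetricSpace X] [Nonempty X]
    {f : X → X} (hf : Isometry f) (hsurj : Surjective f)
    (hconst : ∀ u : C(X, ℝ), (∀ x, u (f x) = u x) → ∀ x y, u x = u y) :
    IsMinimalSet f univ := by
  refine ⟨univ_nonempty, isClosed_univ, image_univ_of_surjective hsurj,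
    fun K _ hne hclosed hinv ↦ ?_⟩
  let u : C(X, ℝ) := ⟨(Metric.infDist · K), Metric.continuous_infDist_pt K⟩
  have hu : ∀ x, u (f x) = u x := fun x ↦
    (congrArg (Metric.infDist (f x)) hinv.symm).trans (Metric.infDist_image hf)
  obtain ⟨y, hy⟩ := hne
  refine eq_univ_of_forall fun x ↦ (hclosed.mem_iff_infDist_zero ⟨y, hy⟩).2 ?_
  exact (hconst u hu x y).trans (Metric.infDist_zero_of_mem hy)

variable {d : Type*} [Fintype d]

open UnitAddTorus

theorem mFourier_apply_eq_toCircle (n : d → ℤ) (x : UnitAddTorus d) :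
    mFourier n x = AddCircle.toCircle (∑ i, n i • x i) := by
  change ∏ i, (AddCircle.toCircle (n i • x i) : ℂ) = _
  induction (Finset.univ : Finset d) using Finset.cons_induction with
  | empty =>
    simp only [Finset.prod_empty, Finset.sum_empty, AddCircle.toCircle_zero, Circle.coe_one]
  | cons i s hi ih =>
    rw [Finset.prod_cons, Finset.sum_cons, AddCircle.toCircle_add, Circle.coe_mul, ih]

theorem mFourier_apply_eq_one_iff {n : d → ℤ} {x : UnitAddTorus d} :
    mFourier n x = 1 ↔ ∑ i, n i • x i = 0 := by
  rw [mFourier_apply_eq_toCircle, Circle.coe_eq_one, ← AddCircle.toCircle_zero,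
    (AddCircle.injective_toCircle one_ne_zero).eq_iff]

theorem mFourier_apply_add (n : d → ℤ) (x y : UnitAddTorus d) :
    mFourier n (x + y) = mFourier n x * mFourier n y := by
  simp only [mFourier_apply_eq_toCircle, Pi.add_apply, smul_add, Finset.sum_add_distrib,
    AddCircle.toCircle_add, Circle.coe_mul]

section Haar

-- `mFourierCoeff` is an integral for the Haar measure, which Mathlib declares only locally as the
-- measure of the circle.
noncomputable local instance : MeasureTheory.MeasureSpace UnitAddCircle := ⟨AddCircle.haarAddCircle⟩

local instance : MeasureTheory.Measure.IsAddHaarMeasure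
    (MeasureTheory.volume : MeasureTheory.Measure UnitAddCircle) :=
  inferInstanceAs (MeasureTheory.Measure.IsAddHaarMeasure AddCircle.haarAddCircle)

theorem mFourierCoeff_comp_add_right (u : UnitAddTorus d → ℂ) (θ : UnitAddTorus d) (n : d → ℤ) :
    mFourierCoeff (fun x ↦ u (x + θ)) n = mFourier n θ * mFourierCoeff u n := by
  have hchar (t : UnitAddTorus d) : mFourier (-n) t = mFourier n θ * mFourier (-n) (t + θ) := by
    rw [mFourier_apply_add, mul_left_comm, ← mFourier_add, add_neg_cancel, mFourier_zero,
      ContinuousMap.one_apply, mul_one]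
  calc ∫ t, mFourier (-n) t • u (t + θ)
      = ∫ t, mFourier n θ * (mFourier (-n) (t + θ) • u (t + θ)) := by
        exact MeasureTheory.integral_congr_ae (.of_forall fun t ↦ by
          dsimp only
          rw [hchar t, smul_eq_mul, smul_eq_mul, mul_assoc])
    _ = mFourier n θ * ∫ t, mFourier (-n) (t + θ) • u (t + θ) :=
        MeasureTheory.integral_const_mul _ _
    _ = mFourier n θ * ∫ t, mFourier (-n) t • u t := by
        rw [MeasureTheory.integral_add_right_eq_self fun t ↦ mFourier (-n) t • u t]

end Haar

theorem mFourierCoeff_eq_zero_of_forall_apply_add_eq {θ : UnitAddTorus d}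
    (hθ : LinearIndependent ℤ θ) {u : UnitAddTorus d → ℂ} (hu : ∀ x, u (x + θ) = u x)
    {n : d → ℤ} (hn : n ≠ 0) : mFourierCoeff u n = 0 := by
  by_contra hcoeff
  have heq : mFourier n θ * mFourierCoeff u n = mFourierCoeff u n := by
    rw [← mFourierCoeff_comp_add_right, funext hu]
  have hrel : ∑ i, n i • θ i = 0 := mFourier_apply_eq_one_iff.1 ((mul_eq_right₀ hcoeff).1 heq)
  exact hn (funext (Fintype.linearIndependent_iff.1 hθ n hrel))

theorem eq_mFourierCoeff_zero {u : C(UnitAddTorus d, ℂ)}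
    (hu : ∀ n ≠ 0, mFourierCoeff u n = 0) (x : UnitAddTorus d) : u x = mFourierCoeff u 0 := by
  have hsummable : Summable (mFourierCoeff u) := (hasSum_single 0 hu).summable
  calc u x = mFourierCoeff u 0 • mFourier 0 x :=
        (hasSum_mFourier_series_apply_of_summable hsummable x).unique
          (hasSum_single 0 fun n hn ↦ by rw [hu n hn, zero_smul])
    _ = mFourierCoeff u 0 := by
        rw [mFourier_zero, ContinuousMap.one_apply, smul_eq_mul, mul_one]

theorem isMinimalSet_univ_add_right {d : Type*} [Finite d] {θ : UnitAddTorus d}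
    (hθ : LinearIndependent ℤ θ) : IsMinimalSet (· + θ) univ := by
  cases nonempty_fintype d
  refine isMinimalSet_univ_of_isometry (isometry_add_right θ) (add_right_surjective θ)
    fun u hu x y ↦ Complex.ofReal_injective ?_
  let v : C(UnitAddTorus d, ℂ) := ⟨fun z ↦ (u z : ℂ), by fun_prop⟩
  have hcoeff : ∀ n ≠ 0, mFourierCoeff v n = 0 := fun n hn ↦
    mFourierCoeff_eq_zero_of_forall_apply_add_eq hθ (fun z ↦ congrArg Complex.ofReal (hu z)) hn
  exact (eq_mFourierCoeff_zero hcoeff x).trans (eq_mFourierCoeff_zero hcoeff y).symm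

theorem isMinimalSet_univ_add_right_of_irrational {α : ℝ} (hα : Irrational α) :
    IsMinimalSet (· + (α : T1)) univ := by
  have hindep : LinearIndependent ℤ fun _ : Unit ↦ (α : T1) := by
    refine Fintype.linearIndependent_iff.2 fun n hn i ↦ ?_
    rw [Fintype.sum_unique, ← AddCircle.coe_zsmul, AddCircle.coe_eq_zero_iff] at hn
    obtain ⟨m, hm⟩ := hn
    by_contra hni
    exact (hα.intCast_mul hni).ne_int m (by simpa using hm.symm)
  exact isMinimalSet_of_semiconj (H := fun (z : T1) (_ : Unit) ↦ z)
    (isMinimalSet_univ_add_right hindep) (by fun_prop) (fun _ ↦ rfl) univ_nonempty isClosed_univ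
    isCompact_univ (image_univ_of_surjective (add_right_surjective _)) fun x _ ↦
      hasSmallFibersAt_of_injective (fun _ _ h ↦ congrFun h ()) x

theorem linearIndependent_coe_pair {α β : ℝ}
    (h : ∀ k m n : ℤ, (k : ℝ) + m * α + n * β = 0 → m = 0 ∧ n = 0) :
    LinearIndependent ℤ ![(α : T1), (β : T1)] := by
  refine LinearIndependent.pair_iff.2 fun m n hmn ↦ ?_
  rw [← AddCircle.coe_zsmul, ← AddCircle.coe_zsmul, ← AddCircle.coe_add,
    AddCircle.coe_eq_zero_iff] at hmn
  obtain ⟨k, hk⟩ := hmn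
  simp only [zsmul_eq_mul, mul_one] at hk
  exact h (-k) m n (by push_cast; linarith)

theorem isMinimalSet_univ_prodMap_add_right {a b : T1} (hab : LinearIndependent ℤ ![a, b]) :
    IsMinimalSet (Prod.map (· + a) (· + b)) univ := by
  have hsemi : Semiconj (Homeomorph.finTwoArrow (X := T1)).symm (Prod.map (· + a) (· + b))
      (· + ![a, b]) := fun z ↦ by
    ext i
    fin_cases i <;> rfl
  exact isMinimalSet_of_semiconj (isMinimalSet_univ_add_right hab) (Homeomorph.continuous _)
    hsemi univ_nonempty isClosed_univ isCompact_univ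
    (image_univ_of_surjective
      (Prod.map_surjective.2 ⟨add_right_surjective a, add_right_surjective b⟩))
    fun x _ ↦ hasSmallFibersAt_of_injective (Homeomorph.injective _) x

end TorusRotation

section CircleMaps

theorem coe_eq_coe_iff_exists_eq_add_int {x y : ℝ} :
    (x : T1) = y ↔ ∃ n : ℤ, x = y + n := by
  rw [← sub_eq_zero, ← AddCircle.coe_sub, AddCircle.coe_eq_zero_iff]
  simp only [zsmul_eq_mul, mul_one, eq_sub_iff_add_eq', eq_comm (a := x)]

theorem bijective_of_lift {φ : T1 → T1} (hφ : Bijective φ) {f : CircleDeg1Lift}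
    (hf : ∀ x : ℝ, (f x : T1) = φ x) : Bijective f := by
  constructor
  · intro x y hxy
    obtain ⟨n, rfl⟩ := coe_eq_coe_iff_exists_eq_add_int.1
      (hφ.injective (by rw [← hf, ← hf, hxy]) : (x : T1) = y)
    simpa using hxy
  · intro y
    obtain ⟨z, hz⟩ := hφ.surjective y
    obtain ⟨x, rfl⟩ := QuotientAddGroup.mk_surjective z
    obtain ⟨n, hn⟩ := coe_eq_coe_iff_exists_eq_add_int.1 ((hf x).trans hz)
    exact ⟨x - n, by rw [f.map_sub_int, hn, add_sub_cancel_right]⟩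

open scoped Pointwise in
theorem mem_stabilizer_range_of_semiconj_add {X G : Type*} [AddCommGroup G] {f : X → X}
    (hf : Surjective f) {F : X → G} {t : G} (hF : Semiconj F f (· + t)) :
    t ∈ AddAction.stabilizer G (range F) := by
  rw [AddAction.mem_stabilizer_iff, ← image_vadd, ← range_comp, ← hf.range_comp F]
  exact congrArg range (funext fun x ↦ (add_comm _ _).trans (hF x).symm)

open scoped Pointwise in
theorem dense_of_dense_stabilizer {G : Type*} [AddGroup G] [TopologicalSpace G]
    [SeparatelyContinuousAdd G] {s : Set G} (hs : s.Nonempty)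
    (h : Dense (AddAction.stabilizer G s : Set G)) : Dense s := by
  obtain ⟨x, hx⟩ := hs
  refine ((Homeomorph.addRight x).surjective.denseRange.dense_image
    (Homeomorph.continuous _) h).mono ?_
  rintro _ ⟨t, ht, rfl⟩
  exact (AddAction.mem_stabilizer_iff.1 ht).subset (vadd_mem_vadd_set hx)

open scoped Pointwise in
theorem continuous_of_semiconj_add_irrational {f : ℝ → ℝ} {F : CircleDeg1Lift}
    (hf : Surjective f) {α : ℝ} (hα : Irrational α) (hF : Semiconj F f (· + α)) :
    Continuous F := by
  have hα_mem : α ∈ AddAction.stabilizer ℝ (range F) :=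
    mem_stabilizer_range_of_semiconj_add hf hF
  have h_one_mem : (1 : ℝ) ∈ AddAction.stabilizer ℝ (range F) :=
    mem_stabilizer_range_of_semiconj_add (add_right_surjective 1) F.map_add_one
  have hdense : Dense (AddSubgroup.closure {α, 1} : Set ℝ) :=
    dense_addSubgroupClosure_pair_iff.2 (by rwa [div_one])
  exact F.monotone.continuous_of_denseRange <| dense_of_dense_stabilizer (range_nonempty F) <|
    hdense.mono ((AddSubgroup.closure_le _).2 (pair_subset hα_mem h_one_mem))

theorem exists_continuous_semiconj_add_translationNumber {f : CircleDeg1Lift} (hf : Bijective f)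
    (hirr : Irrational f.translationNumber) :
    ∃ F : CircleDeg1Lift, Continuous F ∧ Semiconj F f (· + f.translationNumber) := by
  let τ : CircleDeg1Liftˣ := CircleDeg1Lift.translate (Multiplicative.ofAdd f.translationNumber)
  obtain ⟨F, hF⟩ := CircleDeg1Lift.semiconj_of_bijective_of_translationNumber_eq hf
    (CircleDeg1Lift.isUnit_iff_bijective.1 τ.isUnit)
    (CircleDeg1Lift.translationNumber_translate _).symm
  have hsemi : Semiconj F f (· + f.translationNumber) := fun x ↦ (hF x).trans (add_comm _ _)
  exact ⟨F, continuous_of_semiconj_add_irrational hf.surjective hirr hsemi, hsemi⟩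

theorem periodic_coe_apply (F : CircleDeg1Lift) : Periodic (fun x ↦ (F x : T1)) 1 :=
  fun x ↦ by simp

/-- The circle map of degree one whose lift is `F`. -/
def inducedCircleMap (F : CircleDeg1Lift) : T1 → T1 :=
  (periodic_coe_apply F).lift

@[simp]
theorem inducedCircleMap_coe (F : CircleDeg1Lift) (x : ℝ) : inducedCircleMap F x = (F x : T1) :=
  rfl

theorem continuous_inducedCircleMap {F : CircleDeg1Lift} (hF : Continuous F) :
    Continuous (inducedCircleMap F) :=
  continuous_quot_lift _ ((AddCircle.continuous_mk' 1).comp hF)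

theorem hasSmallFibersAt_inducedCircleMap {F : CircleDeg1Lift} (hF : Continuous F) {z : T1}
    (hz : ¬∀ᶠ w in 𝓝 z, inducedCircleMap F w = inducedCircleMap F z) :
    HasSmallFibersAt (inducedCircleMap F) z := by
  intro U hU
  obtain ⟨x, rfl⟩ := QuotientAddGroup.mk_surjective z
  obtain ⟨δ, hδ, hball⟩ := Metric.mem_nhds_iff.1
    ((AddCircle.continuous_mk' 1).continuousAt.preimage_mem_nhds hU)
  obtain ⟨c, hc, d, hd, hcd⟩ : ∃ c ∈ Metric.ball x δ, ∃ d ∈ Metric.ball x δ, F c < F d := by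
    by_contra! hmono
    have hxball : x ∈ Metric.ball x δ := Metric.mem_ball_self hδ
    refine hz (mem_of_superset
      (QuotientAddGroup.isOpenMap_coe.image_mem_nhds (Metric.ball_mem_nhds x hδ)) ?_)
    rintro _ ⟨y, hy, rfl⟩
    exact congrArg ((↑) : ℝ → T1) ((hmono x hxball y hy).antisymm (hmono y hy x hxball))
  obtain ⟨m, hm⟩ := F.continuous_iff_surjective.1 hF ((F c + F d) / 2)
  refine ⟨m, fun w hw ↦ ?_⟩
  obtain ⟨y, rfl⟩ := QuotientAddGroup.mk_surjective w
  obtain ⟨n, hn⟩ := coe_eq_coe_iff_exists_eq_add_int.1 (show (F y : T1) = F m from hw)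
  have hFy : F (y - n) = (F c + F d) / 2 := by rw [F.map_sub_int, hn, hm, add_sub_cancel_right]
  have hcy : c < y - n := F.monotone.reflect_lt (by linarith)
  have hyd : y - n < d := F.monotone.reflect_lt (by linarith)
  have hball_mem : y - n ∈ Metric.ball x δ := by
    rw [Real.ball_eq_Ioo] at hc hd ⊢
    exact ⟨hc.1.trans hcy, hyd.trans hd.2⟩
  have hcoe : ((y - n : ℝ) : T1) = y := coe_eq_coe_iff_exists_eq_add_int.2 ⟨-n, by push_cast; ring⟩
  exact hcoe ▸ hball hball_mem

theorem exists_semiconj_rotation_hasSmallFibersAt {φ : T1 ≃ₜ T1} {f : CircleDeg1Lift}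
    (hf : ∀ x : ℝ, (f x : T1) = φ x) (hirr : Irrational f.translationNumber) {Q : Set T1}
    (hQ : IsMinimalSet φ Q) :
    ∃ H : T1 → T1, Continuous H ∧ Semiconj H φ (· + (f.translationNumber : T1)) ∧
      ∀ x ∈ Q, HasSmallFibersAt H x := by
  obtain ⟨F, hF, hFf⟩ :=
    exists_continuous_semiconj_add_translationNumber (bijective_of_lift φ.bijective hf) hirr
  have hH : Continuous (inducedCircleMap F) := continuous_inducedCircleMap hF
  have hsemi : Semiconj (inducedCircleMap F) φ (· + (f.translationNumber : T1)) := by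
    intro z
    obtain ⟨x, rfl⟩ := QuotientAddGroup.mk_surjective z
    change inducedCircleMap F (φ (x : T1)) = F x + (f.translationNumber : T1)
    rw [← hf, inducedCircleMap_coe, hFf.eq, AddCircle.coe_add]
  have himage : inducedCircleMap F '' Q = univ :=
    (isMinimalSet_univ_add_right_of_irrational hirr).image_eq_univ hH hsemi hQ.2.1.isCompact
      hQ.1 hQ.2.2.1
  have : Infinite T1 :=
    (AddCircle.equivIco 1 0).infinite_iff.2 (Ico_infinite (by norm_num)).to_subtype
  refine ⟨_, hH, hsemi, fun x hx ↦ hasSmallFibersAt_inducedCircleMap hF ?_⟩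
  exact hQ.not_eventually_eq hQ.2.1.isCompact (add_left_injective _) hsemi
    (himage ▸ infinite_univ) hx

end CircleMaps

/-- If `φ, ψ` are orientation-preserving circle homeomorphisms with
irrational rotation numbers `α, β` such that `1, α, β` are rationally independent,
and `Q₁, Q₂` are their unique minimal sets, then the product homeomorphism
`f = φ × ψ` of the torus has `Q₁ × Q₂` as a minimal set. -/
theorem stmt15 (φ ψ : T1 ≃ₜ T1) (Φ Ψ : ℝ → ℝ)
    (hΦc : Continuous Φ) (hΦm : StrictMono Φ) (hΦd : ∀ x : ℝ, Φ (x + 1) = Φ x + 1)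
    (hΦl : ∀ x : ℝ, ((Φ x : T1)) = φ (x : T1))
    (hΨc : Continuous Ψ) (hΨm : StrictMono Ψ) (hΨd : ∀ x : ℝ, Ψ (x + 1) = Ψ x + 1)
    (hΨl : ∀ x : ℝ, ((Ψ x : T1)) = ψ (x : T1))
    (α β : ℝ) (hαirr : Irrational α) (hβirr : Irrational β)
    (hα : ∀ x : ℝ, Tendsto (fun n : ℕ => (Φ^[n] x - x) / n) atTop (𝓝 α))
    (hβ : ∀ x : ℝ, Tendsto (fun n : ℕ => (Ψ^[n] x - x) / n) atTop (𝓝 β))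
    (hindep : ∀ N1 N2 N3 : ℤ, (N1 : ℝ) + N2 * α + N3 * β = 0 → N1 = 0 ∧ N2 = 0 ∧ N3 = 0)
    (Q1 Q2 : Set T1)
    (hQ1 : IsMinimalSet ⇑φ Q1) (hQ2 : IsMinimalSet ⇑ψ Q2)
    (hQU1 : ∀ M : Set T1, IsMinimalSet ⇑φ M → M = Q1)
    (hQU2 : ∀ M : Set T1, IsMinimalSet ⇑ψ M → M = Q2) :
    IsMinimalSet (fun z : T1 × T1 => (φ z.1, ψ z.2)) (Q1 ×ˢ Q2) := by
  let f : CircleDeg1Lift := ⟨⟨Φ, hΦm.monotone⟩, hΦd⟩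
  let g : CircleDeg1Lift := ⟨⟨Ψ, hΨm.monotone⟩, hΨd⟩
  have hτf : f.translationNumber = α :=
    f.translationNumber_eq_of_tendsto₀ (by simpa [f] using hα 0)
  have hτg : g.translationNumber = β :=
    g.translationNumber_eq_of_tendsto₀ (by simpa [g] using hβ 0)
  obtain ⟨H₁, hH₁, hsemi₁, hfib₁⟩ :=
    exists_semiconj_rotation_hasSmallFibersAt (f := f) hΦl (hτf ▸ hαirr) hQ1
  obtain ⟨H₂, hH₂, hsemi₂, hfib₂⟩ :=
    exists_semiconj_rotation_hasSmallFibersAt (f := g) hΨl (hτg ▸ hβirr) hQ2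
  rw [hτf] at hsemi₁
  rw [hτg] at hsemi₂
  have hrot := isMinimalSet_univ_prodMap_add_right
    (linearIndependent_coe_pair fun k m n h ↦ (hindep k m n h).2)
  refine isMinimalSet_of_semiconj (f := Prod.map φ ψ) hrot (hH₁.prodMap hH₂)
    (fun z ↦ Prod.ext (hsemi₁ z.1) (hsemi₂ z.2)) (hQ1.1.prod hQ2.1)
    (hQ1.2.1.prod hQ2.2.1) (hQ1.2.1.prod hQ2.2.1).isCompact ?_
    fun z hz ↦ (hfib₁ z.1 hz.1).prodMap (hfib₂ z.2 hz.2)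
  exact (prodMap_image_prod φ ψ Q1 Q2).trans (by rw [hQ1.2.2.1, hQ2.2.2.1])
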